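/- Let (Ω, 𝓕, ℙ) be a probability space, v > 0, X : Ω → ℝ an integrable random variable, Y : Ω → E a random variable with values in a standard Borel space E, and Z : Ω → ℝ a random variable with law gaussianReal 0 v independent of the pair (X, Y). Set R = X + Z, let κ = condDistrib X Y ℙ be a regular conditional distribution of X given Y, let φ_v denote the density of gaussianReal 0 v, and define g(r, y) = ∫ φ_v(r − x) d(κ y)(x). Then for (law of Y)-almost every y the function g(·, y) is strictly positive and differentiable, and the conditional Tweedie formula holds: E[X | σ(R, Y)] = R + v·((∂_r g)(R, Y)/g(R, Y)) ℙ-almost surely; that is, the posterior mean given both the Gaussian-corrupted input R and the side information Y equals R plus v times the conditional score of R given Y. -/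

import Mathlib

open MeasureTheory ProbabilityTheory

open scoped ENNReal NNReal

/-!
If the joint law of a pair has a density `f` with respect to `μ ⊗ₘ κ`, Bayes' rule says that the
conditional law of the second component given the first is `κ` reweighted by `f` and normalised.
Independence of `Z` from `(X, Y)` puts `((X + Z, Y), X)` in this setting, with the translated noise
density `φ_v (r - x)` as `f`, so `𝔼[X | R = r, Y = y] = ∫ x φ_v (r - x) dκ_y(x) / g (r, y)`.
Since `φ_v' u = -(u / v) φ_v u`, differentiating `g` under the integral sign turns the numerator
into `r g + v ∂_r g`.
-/

section Bayes

variable {α β : Type*} {mα : MeasurableSpace α} {mβ : MeasurableSpace β}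

/-- The posterior kernel of Bayes' rule: for a prior kernel `κ` and a likelihood `f`, each `κ a` is
reweighted by `f a` and divided by its total mass. It is a Markov kernel when `f` is jointly
measurable and all these masses are nonzero and finite; if `f` is not jointly measurable,
`Kernel.withDensity` may return the zero kernel. -/
noncomputable def bayesKernel (κ : Kernel α β) [IsSFiniteKernel κ] (f : α → β → ℝ≥0∞) :
    Kernel α β :=
  κ.withDensity fun a b ↦ f a b / ∫⁻ b', f a b' ∂κ a

variable {κ : Kernel α β} [IsSFiniteKernel κ] {f : α → β → ℝ≥0∞}

lemma measurable_uncurry_div_lintegral (hf : Measurable (Function.uncurry f)) :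
    Measurable (Function.uncurry fun a b ↦ f a b / ∫⁻ b', f a b' ∂κ a) :=
  hf.div (hf.lintegral_kernel_prod_right.comp measurable_fst)

lemma isMarkovKernel_bayesKernel (hf : Measurable (Function.uncurry f))
    (hf_ne_zero : ∀ a, ∫⁻ b, f a b ∂κ a ≠ 0) (hf_ne_top : ∀ a, ∫⁻ b, f a b ∂κ a ≠ ∞) :
    IsMarkovKernel (bayesKernel κ f) := by
  refine ⟨fun a ↦ ⟨?_⟩⟩
  rw [bayesKernel, Kernel.withDensity_apply' _ (measurable_uncurry_div_lintegral hf),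
    setLIntegral_univ]
  simp_rw [div_eq_mul_inv]
  rw [lintegral_mul_const _ hf.of_uncurry_left, ENNReal.mul_inv_cancel (hf_ne_zero a) (hf_ne_top a)]

lemma integral_bayesKernel {F : Type*} [NormedAddCommGroup F] [NormedSpace ℝ F]
    (hf : Measurable (Function.uncurry f)) {a : α}
    (hf_ne_zero : ∫⁻ b, f a b ∂κ a ≠ 0) (hf_ne_top : ∫⁻ b, f a b ∂κ a ≠ ∞) (g : β → F) :
    ∫ b, g b ∂bayesKernel κ f a =
      (∫⁻ b, f a b ∂κ a).toReal⁻¹ • ∫ b, (f a b).toReal • g b ∂κ a := by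
  have hdens_lt_top : ∀ᵐ b ∂κ a, f a b / ∫⁻ b', f a b' ∂κ a < ∞ := by
    filter_upwards [ae_lt_top hf.of_uncurry_left hf_ne_top] with b hb
    exact ENNReal.div_lt_top hb.ne hf_ne_zero
  rw [bayesKernel, Kernel.withDensity_apply _ (measurable_uncurry_div_lintegral hf),
    integral_withDensity_eq_integral_toReal_smul
      (measurable_uncurry_div_lintegral hf).of_uncurry_left hdens_lt_top, ← integral_smul]
  simp_rw [ENNReal.toReal_div, div_eq_inv_mul, mul_smul]

lemma fst_withDensity_compProd {μ : Measure α} [SFinite μ] (hf : Measurable (Function.uncurry f)) :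
    ((μ ⊗ₘ κ).withDensity (Function.uncurry f)).fst = μ.withDensity fun a ↦ ∫⁻ b, f a b ∂κ a := by
  ext s hs
  rw [Measure.fst_apply hs, withDensity_apply _ (measurable_fst hs), withDensity_apply _ hs,
    ← Set.prod_univ, Measure.setLIntegral_compProd hf hs .univ]
  simp_rw [Function.uncurry_apply_pair, setLIntegral_univ]

theorem withDensity_compProd_eq_fst_compProd_bayesKernel {μ : Measure α} [SFinite μ]
    (hf : Measurable (Function.uncurry f))
    (hf_ne_zero : ∀ a, ∫⁻ b, f a b ∂κ a ≠ 0) (hf_ne_top : ∀ a, ∫⁻ b, f a b ∂κ a ≠ ∞) :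
    (μ ⊗ₘ κ).withDensity (Function.uncurry f) =
      ((μ ⊗ₘ κ).withDensity (Function.uncurry f)).fst ⊗ₘ bayesKernel κ f := by
  have := isMarkovKernel_bayesKernel hf hf_ne_zero hf_ne_top
  refine Measure.ext_of_lintegral _ fun h hh ↦ ?_
  rw [fst_withDensity_compProd hf, lintegral_withDensity_eq_lintegral_mul _ hf hh,
    Measure.lintegral_compProd (hf.mul hh), Measure.lintegral_compProd hh,
    lintegral_withDensity_eq_lintegral_mul _ hf.lintegral_kernel_prod_right
      hh.lintegral_kernel_prod_right']
  refine lintegral_congr fun a ↦ ?_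
  rw [Pi.mul_apply, bayesKernel, Kernel.lintegral_withDensity _
    (measurable_uncurry_div_lintegral hf) _ (by fun_prop),
    ← lintegral_const_mul' _ _ (hf_ne_top a)]
  refine lintegral_congr fun b ↦ ?_
  rw [← mul_assoc, ENNReal.mul_div_cancel (hf_ne_zero a) (hf_ne_top a), Pi.mul_apply,
    Function.uncurry_apply_pair]

theorem condDistrib_ae_eq_bayesKernel {Ω : Type*} {mΩ : MeasurableSpace Ω} {P : Measure Ω}
    [IsFiniteMeasure P] [StandardBorelSpace β] [Nonempty β] {T : Ω → α} {X : Ω → β}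
    {μ : Measure α} [SFinite μ] (hX : AEMeasurable X P)
    (hf : Measurable (Function.uncurry f))
    (hf_ne_zero : ∀ a, ∫⁻ b, f a b ∂κ a ≠ 0) (hf_ne_top : ∀ a, ∫⁻ b, f a b ∂κ a ≠ ∞)
    (hlaw : P.map (fun ω ↦ (T ω, X ω)) = (μ ⊗ₘ κ).withDensity (Function.uncurry f)) :
    condDistrib X T P =ᵐ[P.map T] bayesKernel κ f := by
  have := isMarkovKernel_bayesKernel hf hf_ne_zero hf_ne_top
  refine condDistrib_ae_eq_of_measure_eq_compProd T hX ?_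
  have hlaw_fst : P.map T = ((μ ⊗ₘ κ).withDensity (Function.uncurry f)).fst := by
    rw [← hlaw, Measure.fst_map_prodMk₀ hX]
  rw [hlaw_fst, hlaw]
  exact withDensity_compProd_eq_fst_compProd_bayesKernel hf hf_ne_zero hf_ne_top

end Bayes

section AdditiveNoise

variable {G : Type*} [AddCommGroup G] [MeasurableSpace G] {ρ : Measure G} [ρ.IsAddLeftInvariant]
  {φ : G → ℝ≥0∞}

lemma lintegral_add_left_withDensity [MeasurableAdd G] (hφ : Measurable φ) {h : G → ℝ≥0∞}
    (hh : Measurable h) (x : G) :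
    ∫⁻ z, h (x + z) ∂ρ.withDensity φ = ∫⁻ r, φ (r - x) * h r ∂ρ := by
  rw [lintegral_withDensity_eq_lintegral_mul _ hφ (by fun_prop),
    ← lintegral_add_left_eq_self (fun r ↦ φ (r - x) * h r) x]
  simp_rw [add_sub_cancel_left, Pi.mul_apply]

theorem map_add_prodMk_eq_withDensity [MeasurableAdd₂ G] [MeasurableSub₂ G] [SFinite ρ]
    {Ω E : Type*} {mΩ : MeasurableSpace Ω} {mE : MeasurableSpace E}
    {P : Measure Ω} [IsFiniteMeasure P] {X Z : Ω → G} {Y : Ω → E}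
    {ν : Measure E} [SFinite ν] {κ : Kernel E G} [IsSFiniteKernel κ]
    (hX : Measurable X) (hY : Measurable Y) (hZ : Measurable Z) (hφ : Measurable φ)
    (hYX : P.map (fun ω ↦ (Y ω, X ω)) = ν ⊗ₘ κ) (hZlaw : P.map Z = ρ.withDensity φ)
    (hindep : IndepFun (fun ω ↦ (X ω, Y ω)) Z P) :
    P.map (fun ω ↦ ((X ω + Z ω, Y ω), X ω)) =
      ((ρ.prod ν) ⊗ₘ κ.prodMkLeft G).withDensity
        (Function.uncurry fun p x ↦ φ (p.1 - x)) := by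
  have hindep' : IndepFun (fun ω ↦ (Y ω, X ω)) Z P := hindep.comp measurable_swap measurable_id
  have hjoint : P.map (fun ω ↦ ((Y ω, X ω), Z ω)) = (ν ⊗ₘ κ).prod (ρ.withDensity φ) := by
    rw [hindep'.map_prod_eq_prod_map_map (by fun_prop) hZ.aemeasurable, hYX, hZlaw]
  refine Measure.ext_of_lintegral _ fun h hh ↦ ?_
  calc ∫⁻ q, h q ∂P.map (fun ω ↦ ((X ω + Z ω, Y ω), X ω))
      = ∫⁻ q, h ((q.1.2 + q.2, q.1.1), q.1.2) ∂P.map (fun ω ↦ ((Y ω, X ω), Z ω)) := by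
        rw [lintegral_map hh (by fun_prop), lintegral_map (by fun_prop) (by fun_prop)]
    _ = ∫⁻ y, ∫⁻ x, ∫⁻ z, h ((x + z, y), x) ∂ρ.withDensity φ ∂κ y ∂ν := by
        rw [hjoint, lintegral_prod _ (by fun_prop)]
        exact Measure.lintegral_compProd (.lintegral_prod_right (by fun_prop))
    _ = ∫⁻ y, ∫⁻ x, ∫⁻ r, φ (r - x) * h ((r, y), x) ∂ρ ∂κ y ∂ν := by
        refine lintegral_congr fun y ↦ lintegral_congr fun x ↦ ?_
        exact lintegral_add_left_withDensity hφ (h := fun r ↦ h ((r, y), x)) (by fun_prop) x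
    _ = ∫⁻ y, ∫⁻ r, ∫⁻ x, φ (r - x) * h ((r, y), x) ∂κ y ∂ρ ∂ν :=
        lintegral_congr fun y ↦ lintegral_lintegral_swap (by fun_prop)
    _ = ∫⁻ p, ∫⁻ x, φ (p.1 - x) * h (p, x) ∂κ.prodMkLeft G p ∂ρ.prod ν := by
        rw [lintegral_prod_symm _
          (Measurable.lintegral_kernel_prod_right (by fun_prop)).aemeasurable]
        rfl
    _ = _ := by
        rw [lintegral_withDensity_eq_lintegral_mul _ (by fun_prop) hh,
          Measure.lintegral_compProd (by fun_prop)]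
        rfl

end AdditiveNoise

section GaussianMixture

lemma hasDerivAt_gaussianPDFReal (m : ℝ) (v : ℝ≥0) (x : ℝ) :
    HasDerivAt (gaussianPDFReal m v) (-((x - m) / v) * gaussianPDFReal m v x) x := by
  have hexponent : HasDerivAt (fun x : ℝ ↦ -(x - m) ^ 2 / (2 * v)) (-((x - m) / v)) x := by
    refine ((((hasDerivAt_id x).sub_const m).pow 2).neg.div_const (2 * (v : ℝ))).congr_deriv ?_
    simp only [id_eq, Nat.cast_ofNat, Nat.add_one_sub_one, pow_one, mul_one]
    ring
  rw [gaussianPDFReal_def]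
  exact (hexponent.exp.const_mul _).congr_deriv (by ring)

@[fun_prop]
lemma continuous_gaussianPDFReal (m : ℝ) (v : ℝ≥0) : Continuous (gaussianPDFReal m v) :=
  continuous_iff_continuousAt.2 fun x ↦ (hasDerivAt_gaussianPDFReal m v x).continuousAt

lemma gaussianPDFReal_le (m : ℝ) (v : ℝ≥0) (x : ℝ) :
    gaussianPDFReal m v x ≤ (√(2 * Real.pi * v))⁻¹ := by
  refine mul_le_of_le_one_right (by positivity) (Real.exp_le_one_iff.2 ?_)
  exact div_nonpos_of_nonpos_of_nonneg (neg_nonpos.2 (sq_nonneg _)) (by positivity)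

lemma abs_le_exp_sq_div_two (t : ℝ) : |t| ≤ Real.exp (t ^ 2 / 2) :=
  calc |t| ≤ t ^ 2 / 2 + 1 := by nlinarith [sq_nonneg (|t| - 1), sq_abs t]
    _ ≤ Real.exp (t ^ 2 / 2) := Real.add_one_le_exp _

lemma abs_sub_mul_gaussianPDFReal_le (m : ℝ) (v : ℝ≥0) (x : ℝ) :
    |x - m| * gaussianPDFReal m v x ≤ √v * (√(2 * Real.pi * v))⁻¹ := by
  rcases eq_or_ne v 0 with rfl | hv
  · simp
  have hsqrt : 0 < √(v : ℝ) := Real.sqrt_pos.2 (NNReal.coe_pos.2 (pos_iff_ne_zero.2 hv))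
  have hexponent : ((x - m) / √v) ^ 2 / 2 = (x - m) ^ 2 / (2 * v) := by
    rw [div_pow, Real.sq_sqrt v.coe_nonneg, div_div, mul_comm]
  have habs : |x - m| ≤ √v * Real.exp ((x - m) ^ 2 / (2 * v)) := by
    have := abs_le_exp_sq_div_two ((x - m) / √v)
    rwa [hexponent, abs_div, abs_of_pos hsqrt, div_le_iff₀' hsqrt] at this
  calc |x - m| * gaussianPDFReal m v x
      ≤ √v * Real.exp ((x - m) ^ 2 / (2 * v)) * gaussianPDFReal m v x := by
        gcongr; exact gaussianPDFReal_nonneg m v x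
    _ = √v * (√(2 * Real.pi * v))⁻¹ := by
        rw [gaussianPDFReal, neg_div, Real.exp_neg]
        field_simp

/-- The density of the convolution `μ ∗ N(0, v)`. For `v = 0` it is `0`, because
`gaussianPDFReal 0 0 = 0`. -/
noncomputable def gaussianMixturePDFReal (μ : Measure ℝ) (v : ℝ≥0) (r : ℝ) : ℝ :=
  ∫ x, gaussianPDFReal 0 v (r - x) ∂μ

variable (μ : Measure ℝ) [IsFiniteMeasure μ] {v : ℝ≥0} (r : ℝ)

lemma integrable_gaussianPDFReal_sub : Integrable (fun x ↦ gaussianPDFReal 0 v (r - x)) μ := by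
  refine .of_bound (C := (√(2 * Real.pi * v))⁻¹) (by fun_prop) (ae_of_all _ fun x ↦ ?_)
  rw [Real.norm_of_nonneg (gaussianPDFReal_nonneg _ _ _)]
  exact gaussianPDFReal_le 0 v (r - x)

lemma gaussianMixturePDFReal_pos [NeZero μ] (hv : v ≠ 0) : 0 < gaussianMixturePDFReal μ v r := by
  have hpos (x : ℝ) : 0 < gaussianPDFReal 0 v (r - x) := gaussianPDFReal_pos 0 v _ hv
  have hsupport : Function.support (fun x ↦ gaussianPDFReal 0 v (r - x)) = Set.univ :=
    Set.eq_univ_of_forall fun x ↦ (hpos x).ne'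
  rw [gaussianMixturePDFReal, integral_pos_iff_support_of_nonneg (fun x ↦ (hpos x).le)
    (integrable_gaussianPDFReal_sub μ r), hsupport]
  exact NeZero.pos _

lemma lintegral_gaussianPDF_sub :
    ∫⁻ x, gaussianPDF 0 v (r - x) ∂μ = ENNReal.ofReal (gaussianMixturePDFReal μ v r) :=
  (ofReal_integral_eq_lintegral_ofReal (integrable_gaussianPDFReal_sub μ r)
    (ae_of_all _ fun _ ↦ gaussianPDFReal_nonneg _ _ _)).symm

lemma lintegral_gaussianPDF_sub_ne_zero [NeZero μ] (hv : v ≠ 0) :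
    ∫⁻ x, gaussianPDF 0 v (r - x) ∂μ ≠ 0 := by
  rw [lintegral_gaussianPDF_sub]
  exact (ENNReal.ofReal_pos.2 (gaussianMixturePDFReal_pos μ r hv)).ne'

lemma lintegral_gaussianPDF_sub_ne_top : ∫⁻ x, gaussianPDF 0 v (r - x) ∂μ ≠ ∞ := by
  rw [lintegral_gaussianPDF_sub]
  exact ENNReal.ofReal_ne_top

lemma integrable_and_hasDerivAt_gaussianMixturePDFReal :
    Integrable (fun x ↦ -((r - x) / v) * gaussianPDFReal 0 v (r - x)) μ ∧
      HasDerivAt (gaussianMixturePDFReal μ v)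
        (∫ x, -((r - x) / v) * gaussianPDFReal 0 v (r - x) ∂μ) r := by
  have hbound (u : ℝ) :
      ‖-(u / v) * gaussianPDFReal 0 v u‖ ≤ √v * (√(2 * Real.pi * v))⁻¹ / v := by
    rw [norm_mul, norm_neg, norm_div, Real.norm_of_nonneg (gaussianPDFReal_nonneg _ _ _),
      Real.norm_of_nonneg v.coe_nonneg, Real.norm_eq_abs, div_mul_eq_mul_div]
    refine div_le_div_of_nonneg_right ?_ v.coe_nonneg
    simpa only [sub_zero] using abs_sub_mul_gaussianPDFReal_le 0 v u
  have hderiv (x r : ℝ) : HasDerivAt (fun r ↦ gaussianPDFReal 0 v (r - x))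
      (-((r - x) / v) * gaussianPDFReal 0 v (r - x)) r := by
    simpa only [sub_zero] using (hasDerivAt_gaussianPDFReal 0 v (r - x)).comp_sub_const r x
  exact hasDerivAt_integral_of_dominated_loc_of_deriv_le Filter.univ_mem
    (.of_forall fun r ↦ by fun_prop) (integrable_gaussianPDFReal_sub μ r) (by fun_prop)
    (ae_of_all _ fun x r _ ↦ hbound (r - x)) (integrable_const _)
    (ae_of_all _ fun x r _ ↦ hderiv x r)

lemma differentiable_gaussianMixturePDFReal : Differentiable ℝ (gaussianMixturePDFReal μ v) :=
  fun r ↦ (integrable_and_hasDerivAt_gaussianMixturePDFReal μ r).2.differentiableAt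

theorem integral_gaussianPDFReal_sub_mul_self (hv : v ≠ 0) :
    ∫ x, gaussianPDFReal 0 v (r - x) * x ∂μ =
      r * gaussianMixturePDFReal μ v r + v * deriv (gaussianMixturePDFReal μ v) r := by
  obtain ⟨hint, hderiv⟩ := integrable_and_hasDerivAt_gaussianMixturePDFReal (v := v) μ r
  rw [hderiv.deriv, gaussianMixturePDFReal, ← integral_const_mul, ← integral_const_mul,
    ← integral_add ((integrable_gaussianPDFReal_sub μ r).const_mul r) (hint.const_mul _)]
  refine integral_congr_ae (ae_of_all _ fun x ↦ ?_)
  have : (v : ℝ) ≠ 0 := NNReal.coe_ne_zero.2 hv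
  field_simp
  ring

end GaussianMixture

section Tweedie

variable {E : Type*} {mE : MeasurableSpace E} {v : ℝ≥0}

/-- The posterior kernel of a real signal with prior kernel `κ`, given the pair `(r, y)` of an
observation `r` of the signal corrupted by `N(0, v)` noise and the side information `y`. -/
noncomputable def gaussianPosterior (κ : Kernel E ℝ) [IsSFiniteKernel κ] (v : ℝ≥0) :
    Kernel (ℝ × E) ℝ :=
  bayesKernel (κ.prodMkLeft ℝ) fun p x ↦ gaussianPDF 0 v (p.1 - x)

lemma measurable_gaussianPDF_fst_sub :
    Measurable (Function.uncurry fun (p : ℝ × E) x ↦ gaussianPDF 0 v (p.1 - x)) :=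
  (measurable_gaussianPDF 0 v).comp (by fun_prop)

theorem integral_gaussianPosterior (κ : Kernel E ℝ) [IsFiniteKernel κ] (hv : v ≠ 0)
    (r : ℝ) (y : E) [NeZero (κ y)] :
    ∫ x, x ∂gaussianPosterior κ v (r, y) =
      r + v * (deriv (gaussianMixturePDFReal (κ y) v) r / gaussianMixturePDFReal (κ y) v r) := by
  have hpos := gaussianMixturePDFReal_pos (κ y) r hv
  rw [gaussianPosterior, integral_bayesKernel measurable_gaussianPDF_fst_sub
    (lintegral_gaussianPDF_sub_ne_zero (κ y) r hv) (lintegral_gaussianPDF_sub_ne_top (κ y) r)]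
  simp only [Kernel.prodMkLeft_apply, toReal_gaussianPDF, smul_eq_mul]
  rw [lintegral_gaussianPDF_sub, ENNReal.toReal_ofReal hpos.le,
    integral_gaussianPDFReal_sub_mul_self (κ y) r hv]
  field_simp

variable {Ω : Type*} {mΩ : MeasurableSpace Ω} {P : Measure Ω} [IsFiniteMeasure P]
  {X Z : Ω → ℝ} {Y : Ω → E}

theorem condDistrib_add_gaussian_ae_eq_gaussianPosterior (hv : v ≠ 0)
    (hX : Measurable X) (hY : Measurable Y) (hZ : Measurable Z)
    (hZlaw : P.map Z = gaussianReal 0 v) (hindep : IndepFun (fun ω ↦ (X ω, Y ω)) Z P) :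
    condDistrib X (fun ω ↦ (X ω + Z ω, Y ω)) P
      =ᵐ[P.map fun ω ↦ (X ω + Z ω, Y ω)] gaussianPosterior (condDistrib X Y P) v := by
  rw [gaussianReal_of_var_ne_zero 0 hv] at hZlaw
  exact condDistrib_ae_eq_bayesKernel hX.aemeasurable measurable_gaussianPDF_fst_sub
    (fun p ↦ lintegral_gaussianPDF_sub_ne_zero (condDistrib X Y P p.2) p.1 hv)
    (fun p ↦ lintegral_gaussianPDF_sub_ne_top (condDistrib X Y P p.2) p.1)
    (map_add_prodMk_eq_withDensity hX hY hZ (measurable_gaussianPDF 0 v)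
      (compProd_map_condDistrib hX.aemeasurable).symm hZlaw hindep)

theorem conditional_tweedie_formula_general (hv : v ≠ 0)
    (hX : Measurable X) (hY : Measurable Y) (hZ : Measurable Z) (hXint : Integrable X P)
    (hZlaw : P.map Z = gaussianReal 0 v) (hindep : IndepFun (fun ω ↦ (X ω, Y ω)) Z P)
    {R : Ω → ℝ} (hR : R = fun ω ↦ X ω + Z ω)
    {g : ℝ → E → ℝ} (hg : g = fun r y ↦ gaussianMixturePDFReal (condDistrib X Y P y) v r) :
    (∀ y, (∀ r, 0 < g r y) ∧ Differentiable ℝ fun r ↦ g r y) ∧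
      P[X | MeasurableSpace.comap (fun ω ↦ (R ω, Y ω)) inferInstance]
        =ᵐ[P] fun ω ↦ R ω + v * (deriv (fun r ↦ g r (Y ω)) (R ω) / g (R ω) (Y ω)) := by
  subst hR hg
  have hRY : Measurable fun ω ↦ (X ω + Z ω, Y ω) := by fun_prop
  refine ⟨fun y ↦ ⟨fun r ↦ gaussianMixturePDFReal_pos _ r hv,
    differentiable_gaussianMixturePDFReal _⟩, ?_⟩
  have hposterior := ae_of_ae_map hRY.aemeasurable
    (condDistrib_add_gaussian_ae_eq_gaussianPosterior hv hX hY hZ hZlaw hindep)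
  filter_upwards [condExp_ae_eq_integral_condDistrib' hRY hXint, hposterior] with ω hmean hω
  rw [hmean, hω]
  exact integral_gaussianPosterior (condDistrib X Y P) hv (X ω + Z ω) (Y ω)

end Tweedie

/-- Conditional Tweedie formula (eq. (1) with side information): for
`R = X + Z` with `Z ~ N(0, v)` independent of the pair `(X, Y)`, and
`g(r, y) = ∫ φ_v(r − x) d(condDistrib X Y ℙ y)(x)` the conditional density of
`R` given `Y = y`, the function `g(·, y)` is a.s. strictly positive and
differentiable, and `E[X | σ(R, Y)] = R + v·(∂_r g)(R, Y)/g(R, Y)` a.s. -/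
theorem conditional_tweedie_formula
    {Ω : Type*} [MeasureSpace Ω] [IsProbabilityMeasure (ℙ : Measure Ω)]
    {E : Type*} [MeasurableSpace E] [StandardBorelSpace E] [Nonempty E]
    (v : ℝ) (hv : 0 < v)
    (X : Ω → ℝ) (Y : Ω → E) (Z : Ω → ℝ)
    (hX : Measurable X) (hY : Measurable Y) (hZ : Measurable Z)
    (hXint : Integrable X ℙ)
    (hZlaw : Measure.map Z ℙ = gaussianReal 0 ⟨v, hv.le⟩)
    (hindep : IndepFun (fun ω => (X ω, Y ω)) Z ℙ)
    (R : Ω → ℝ) (hR : R = fun ω => X ω + Z ω)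
    (g : ℝ → E → ℝ)
    (hg : g = fun r y => ∫ x, gaussianPDFReal 0 ⟨v, hv.le⟩ (r - x) ∂(condDistrib X Y ℙ y)) :
    (∀ᵐ y ∂(Measure.map Y ℙ),
      (∀ r, 0 < g r y) ∧ Differentiable ℝ (fun r => g r y)) ∧
    ℙ[X | MeasurableSpace.comap (fun ω => (R ω, Y ω)) inferInstance]
      =ᵐ[ℙ] fun ω =>
        R ω + v * (deriv (fun r => g r (Y ω)) (R ω) / g (R ω) (Y ω)) := by
  have hv_ne_zero : (⟨v, hv.le⟩ : ℝ≥0) ≠ 0 := NNReal.coe_ne_zero.1 hv.ne'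
  exact (conditional_tweedie_formula_general hv_ne_zero hX hY hZ hXint hZlaw hindep hR hg).imp_left
    (ae_of_all _)
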